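/- There are universal constants C, c > 0 with the following property. Let n ≥ C and 2 ≤ d ≤ n^{1/4}. Then the total variation mixing time t_mix(Q_u, 1/4) of the switch chain (Ω^B_n(d), π_u, Q_u) is at least c·n·d·log n; equivalently, for every 0 ≤ t ≤ c·n·d·log n there exists G₀ ∈ Ω^B_n(d) such that ‖exp(t·Q_u)(G₀,·) − π_u‖_TV > 1/4. -/

import Mathlib

/-!
Start the chain from any `G₀` and watch the overlap `|G ∩ G₀|` (`ov`). It is `nd` at time `0`.
Under the uniform measure it has mean `d²`, since by column symmetry every potential edge is present
with probability `d / n` (`card_edge_mul`, `sum_ov`); hence it is below `2d²` with probability at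
least `1/2` (`half_le_piU`).

To see that the chain keeps a large overlap, consider the Lyapunov function
`φ(G) = 1 / (1 + |G ∩ G₀|)` (`lyap`). A switching destroying `m ∈ {0, 1, 2}` edges of `G₀` raises
`φ` by at most `2m / (x (x + 1))`, where `x` is the current overlap. As `m` sums to `2 · nd · x` over
ordered pairs of edges, and the rate of each switching is of order `(nd)⁻²`, the generator satisfies
`Q_u φ ≤ (16 / nd) φ` (`Qu_lyap_le`). This integrates to
`exp(t Q_u) φ (G₀) ≤ exp(16 t / nd) / nd` (`matExp_mulVec_le`), and Markov's inequality bounds the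
probability of an overlap below `2d²` at time `t` by `2 d² exp(16 t / nd) / nd`
(`prob_small_overlap_le`). For `t ≤ (1/64) n d log n` and `d ≤ n^{1/4}` this is at most
`2 n^{-1/2} < 1/4`, so the event `{|G ∩ G₀| < 2d²}` separates the two laws by more than `1/4`.
Working with `φ` instead of the overlap itself gives the lower tail from a first-moment bound.
-/

open Finset

noncomputable section

attribute [local instance] Classical.propDecidable

/-- Bipartite graphs on `[n] ⊔ [n]` as 0/1 (Boolean) biadjacency matrices. -/
abbrev BG (n : ℕ) := Fin n → Fin n → Bool

/-- `d`-regularity: all row and column sums equal `d`. -/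
def IsBipReg (n d : ℕ) (A : BG n) : Prop :=
  (∀ i, (Finset.univ.filter fun j => A i j = true).card = d) ∧
    (∀ j, (Finset.univ.filter fun i => A i j = true).card = d)

/-- `Ω^B_n(d)`: the set of simple bipartite `d`-regular graphs. -/
abbrev OmegaB (n d : ℕ) := {A : BG n // IsBipReg n d A}

/-- The result of the simple switching `⟨i₁, i₂, j₁, j₂⟩`: edges `(i₁,j₁)`, `(i₂,j₂)`
are destroyed and replaced by `(i₁,j₂)`, `(i₂,j₁)`. -/
def switchMove {n : ℕ} (A : BG n) (i₁ i₂ j₁ j₂ : Fin n) : BG n :=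
  fun i j =>
    if (i = i₁ ∧ j = j₁) ∨ (i = i₂ ∧ j = j₂) then false
    else if (i = i₁ ∧ j = j₂) ∨ (i = i₂ ∧ j = j₁) then true
    else A i j

/-- `B` is obtained from `A` by a valid simple switching. -/
def SwitchAdj {n : ℕ} (A B : BG n) : Prop :=
  ∃ i₁ i₂ j₁ j₂ : Fin n, i₁ ≠ i₂ ∧ j₁ ≠ j₂ ∧
    A i₁ j₁ = true ∧ A i₂ j₂ = true ∧ A i₁ j₂ = false ∧ A i₂ j₁ = false ∧
    B = switchMove A i₁ i₂ j₁ j₂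

/-- Number of graphs reachable from `G` by one simple switching. -/
def numNeighbors (n d : ℕ) (G : OmegaB n d) : ℕ :=
  (Finset.univ.filter fun G' : OmegaB n d => SwitchAdj G.1 G'.1).card

/-- The switch chain generator `Q_u`. -/
def Qu (n d : ℕ) (G₁ G₂ : OmegaB n d) : ℝ :=
  if G₁ = G₂ then -(numNeighbors n d G₁ : ℝ) * (2 / ((n * d : ℝ) * ((n * d : ℝ) - 1)))
  else if SwitchAdj G₁.1 G₂.1 then 2 / ((n * d : ℝ) * ((n * d : ℝ) - 1))
  else 0

/-- The uniform measure `π_u` on `Ω^B_n(d)`. -/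
def piU (n d : ℕ) : OmegaB n d → ℝ := fun _ => (Fintype.card (OmegaB n d) : ℝ)⁻¹

/-- Entropy `Ent_π(f) = E_π[f (log f - log E_π f)]`. -/
def entPi {Ω : Type*} [Fintype Ω] (π f : Ω → ℝ) : ℝ :=
  ∑ ω, π ω * f ω * (Real.log (f ω) - Real.log (∑ ω', π ω' * f ω'))

/-- Dirichlet form `E_π(log f, f)`. -/
def dirForm {Ω : Type*} [Fintype Ω] (π : Ω → ℝ) (Q : Ω → Ω → ℝ) (f : Ω → ℝ) : ℝ :=
  (1 / 2) * ∑ ω, ∑ ω', π ω * Q ω ω' * (f ω - f ω') * Real.log (f ω / f ω')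

/-- The matrix exponential, defined by its power series. -/
def matExp {m : Type*} [Fintype m] [DecidableEq m] (A : Matrix m m ℝ) : Matrix m m ℝ :=
  ∑' k : ℕ, ((k.factorial : ℝ)⁻¹) • A ^ k

/-- Total variation distance between two probability vectors. -/
def tvDist {Ω : Type*} [Fintype Ω] (μ ν : Ω → ℝ) : ℝ :=
  (1 / 2) * ∑ ω, |μ ω - ν ω|

/-- The generator `Q_u` viewed as a matrix. -/
def QuMat (n d : ℕ) : Matrix (OmegaB n d) (OmegaB n d) ℝ := Matrix.of (Qu n d)

/-! ### Overlap of two graphs -/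

/-- The edge set of the bipartite graph `A`, as pairs (row, column). -/
def edges {n : ℕ} (A : BG n) : Finset (Fin n × Fin n) :=
  univ.filter fun p => A p.1 p.2 = true

/-- The number of edges common to `A` and `B`. -/
def ov {n : ℕ} (A B : BG n) : ℕ := (edges A ∩ edges B).card

lemma mem_edges {n : ℕ} (A : BG n) (p : Fin n × Fin n) : p ∈ edges A ↔ A p.1 p.2 = true := by
  simp [edges]

lemma card_edges {n d : ℕ} (A : OmegaB n d) : (edges A.1).card = n * d := by
  have h : (edges A.1).card = ∑ i : Fin n, (univ.filter fun j => A.1 i j = true).card := by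
    simp only [edges, Finset.card_filter]
    rw [Fintype.sum_prod_type]
  rw [h, Finset.sum_congr rfl fun i _ => A.2.1 i]
  simp

/-- The number of the edges `e`, `f` lying in `G₀`, counted with multiplicity: an upper bound
for the overlap with `G₀` lost when a switching destroys `e` and `f`. -/
def hit {n : ℕ} (G₀ : BG n) (e f : Fin n × Fin n) : ℕ :=
  (if e ∈ edges G₀ then 1 else 0) + (if f ∈ edges G₀ then 1 else 0)

lemma hit_eq_card {n : ℕ} (G₀ : BG n) {e f : Fin n × Fin n} (hef : e ≠ f) :
    hit G₀ e f = (({e, f} : Finset (Fin n × Fin n)) ∩ edges G₀).card := by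
  rw [← Finset.filter_mem_eq_inter, Finset.card_filter, Finset.sum_pair hef]
  rfl

lemma hit_le_ov {n : ℕ} (G₀ A : BG n) {e f : Fin n × Fin n} (hef : e ≠ f)
    (he : e ∈ edges A) (hf : f ∈ edges A) : hit G₀ e f ≤ ov G₀ A := by
  rw [hit_eq_card G₀ hef, ov]
  apply Finset.card_le_card
  intro p hp
  simp only [Finset.mem_inter, Finset.mem_insert, Finset.mem_singleton] at hp ⊢
  rcases hp with ⟨rfl | rfl, h⟩ <;> exact ⟨h, by assumption⟩

/-- A switching destroys only its two edges, so the overlap drops by at most their `hit`. -/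
lemma ov_le_switch {n : ℕ} (G₀ A : BG n) {i₁ i₂ j₁ j₂ : Fin n} (hi : i₁ ≠ i₂) :
    ov G₀ A ≤ ov G₀ (switchMove A i₁ i₂ j₁ j₂) + hit G₀ (i₁, j₁) (i₂, j₂) := by
  rw [hit_eq_card G₀ (by simp [hi]), ov, ov]
  refine le_trans (Finset.card_le_card ?_) (Finset.card_union_le _ _)
  rintro ⟨i, j⟩ hp
  simp only [Finset.mem_inter, Finset.mem_insert, Finset.mem_singleton, Finset.mem_union,
    mem_edges, switchMove, Prod.mk.injEq] at hp ⊢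
  by_cases h : (i = i₁ ∧ j = j₁) ∨ (i = i₂ ∧ j = j₂)
  · exact Or.inr ⟨h, hp.1⟩
  · left
    refine ⟨hp.1, ?_⟩
    rw [if_neg h]
    split_ifs
    · rfl
    · exact hp.2

/-- Increment of `x ↦ 1 / (x + 1)` when `x` drops by at most `m ≤ 2`. For `x = 0` the right-hand
side is the junk value `0`, and `m = 0` is forced. -/
lemma recip_diff_le {x y m : ℕ} (hm : m ≤ 2) (hmx : m ≤ x) (hxy : x ≤ y + m) :
    1 / ((y : ℝ) + 1) - 1 / ((x : ℝ) + 1) ≤ 2 * m / ((x : ℝ) * (x + 1)) := by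
  have hy : ((x : ℝ) - m) + 1 ≤ (y : ℝ) + 1 := by
    have : (x : ℝ) ≤ y + m := by exact_mod_cast hxy
    linarith
  have hmx' : (m : ℝ) ≤ x := by exact_mod_cast hmx
  have h1 : 1 / ((y : ℝ) + 1) ≤ 1 / ((x : ℝ) - m + 1) :=
    one_div_le_one_div_of_le (by linarith) hy
  rcases Nat.eq_zero_or_pos x with rfl | hx
  · have : m = 0 := by omega
    subst this
    simp at h1 ⊢
    exact h1
  have hx' : (1 : ℝ) ≤ x := by exact_mod_cast hx
  have h2 : 1 / ((x : ℝ) - m + 1) - 1 / ((x : ℝ) + 1) = m / (((x : ℝ) - m + 1) * (x + 1)) := by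
    have : (x : ℝ) - m + 1 ≠ 0 := by linarith
    field_simp
    ring
  have h3 : (m : ℝ) / (((x : ℝ) - m + 1) * (x + 1)) ≤ 2 * m / ((x : ℝ) * (x + 1)) := by
    have h0 : (0 : ℝ) ≤ m := by positivity
    have hk : (x : ℝ) ≤ 2 * ((x : ℝ) - m + 1) := by
      have : x + 2 * m ≤ 2 * x + 2 := by omega
      have : (x : ℝ) + 2 * m ≤ 2 * x + 2 := by exact_mod_cast this
      linarith
    have hp : (0 : ℝ) < (x : ℝ) - m + 1 := by linarith
    rw [div_le_div_iff₀ (by positivity) (by positivity)]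
    have : (m : ℝ) * (x + 1) * x ≤ (m : ℝ) * (x + 1) * (2 * ((x : ℝ) - m + 1)) :=
      mul_le_mul_of_nonneg_left hk (by positivity)
    nlinarith
  linarith

/-! ### The drift inequality -/

/-- The Lyapunov function `1 / (1 + |G ∩ G₀|)`. -/
def lyap {n d : ℕ} (G₀ G : OmegaB n d) : ℝ := 1 / ((ov G₀.1 G.1 : ℝ) + 1)

lemma sum_hit {n d : ℕ} (G₀ G : OmegaB n d) :
    ∑ p ∈ edges G.1 ×ˢ edges G.1, (hit G₀.1 p.1 p.2 : ℝ)
      = 2 * (n * d : ℝ) * ov G₀.1 G.1 := by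
  have h : ∑ e ∈ edges G.1, (if e ∈ edges G₀.1 then (1 : ℝ) else 0) = ov G₀.1 G.1 := by
    rw [← Finset.sum_filter, Finset.filter_mem_eq_inter, Finset.inter_comm]
    simp [ov]
  rw [Finset.sum_product]
  simp only [hit, Nat.cast_add, Nat.cast_ite, Nat.cast_one, Nat.cast_zero,
    Finset.sum_add_distrib, h, Finset.sum_const, card_edges, nsmul_eq_mul, Nat.cast_mul,
    ← Finset.mul_sum]
  ring

/-- Each neighbour `G'` of `G` is encoded by the ordered pair of edges of `G` it destroys, which
determines `G'` and bounds the jump of `lyap`. The implication sits inside the existential so that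
the encoding can be chosen as a total function. -/
lemma exists_pair {n d : ℕ} (hn : 0 < n) (G₀ G G' : OmegaB n d) :
    ∃ p : (Fin n × Fin n) × (Fin n × Fin n), SwitchAdj G.1 G'.1 →
      p ∈ edges G.1 ×ˢ edges G.1 ∧ G'.1 = switchMove G.1 p.1.1 p.2.1 p.1.2 p.2.2 ∧
      lyap G₀ G' - lyap G₀ G ≤
        2 * (hit G₀.1 p.1 p.2 : ℝ) / ((ov G₀.1 G.1 : ℝ) * ((ov G₀.1 G.1 : ℝ) + 1)) := by
  by_cases h : SwitchAdj G.1 G'.1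
  · obtain ⟨i₁, i₂, j₁, j₂, hi, hj, h1, h2, h3, h4, hG⟩ := h
    refine ⟨((i₁, j₁), (i₂, j₂)), fun _ => ⟨?_, hG, ?_⟩⟩
    · simp [mem_edges, h1, h2]
    · apply recip_diff_le
      · unfold hit
        split_ifs <;> simp
      · exact hit_le_ov _ _ (by simp [hi]) (by simpa [mem_edges] using h1)
          (by simpa [mem_edges] using h2)
      · rw [hG]
        exact ov_le_switch _ _ hi
  · exact ⟨((⟨0, hn⟩, ⟨0, hn⟩), (⟨0, hn⟩, ⟨0, hn⟩)), fun hadj => absurd hadj h⟩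

/-- The jumps of `lyap G₀` out of `G` sum to at most `4nd · lyap G₀ G`: a destroyed pair of edges
meeting `G₀` in `m` edges raises `lyap` by at most `2m / (x (x + 1))`, `x` being the overlap, and
each neighbour comes from its own pair of edges. -/
lemma sum_neighbors_le {n d : ℕ} (hn : 0 < n) (G₀ G : OmegaB n d) :
    ∑ G' ∈ univ.filter (fun G' : OmegaB n d => SwitchAdj G.1 G'.1), (lyap G₀ G' - lyap G₀ G)
      ≤ 4 * (n * d : ℝ) * lyap G₀ G := by
  choose e he using exists_pair hn G₀ G
  have hl : lyap G₀ G = 1 / ((ov G₀.1 G.1 : ℝ) + 1) := rfl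
  have hs := sum_hit G₀ G
  have hx0 : (0 : ℝ) ≤ ov G₀.1 G.1 := by positivity
  generalize (ov G₀.1 G.1 : ℝ) = x at he hl hs hx0
  let F : (Fin n × Fin n) × (Fin n × Fin n) → ℝ :=
    fun p => 2 * (hit G₀.1 p.1 p.2 : ℝ) / (x * (x + 1))
  have hF : ∀ p, 0 ≤ F p := fun p => by positivity
  have hFs : ∑ p ∈ edges G.1 ×ˢ edges G.1, F p ≤ 4 * (n * d : ℝ) * lyap G₀ G := by
    calc ∑ p ∈ edges G.1 ×ˢ edges G.1, F p = 2 * (2 * (n * d : ℝ) * x) / (x * (x + 1)) := by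
          rw [← hs, Finset.mul_sum, Finset.sum_div]
      _ ≤ 4 * (n * d : ℝ) * lyap G₀ G := by
          rw [hl]
          rcases hx0.eq_or_lt with h | h
          · rw [← h]
            simp
            positivity
          · apply le_of_eq
            field_simp
            ring
  refine le_trans ?_ hFs
  have hNe : ∀ G' ∈ univ.filter (fun G' : OmegaB n d => SwitchAdj G.1 G'.1),
      SwitchAdj G.1 G'.1 := fun G' h => (Finset.mem_filter.mp h).2
  generalize univ.filter (fun G' : OmegaB n d => SwitchAdj G.1 G'.1) = N at hNe
  have hinj : Set.InjOn e N := by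
    intro A hA B hB hAB
    apply Subtype.ext
    rw [(he A (hNe A hA)).2.1, (he B (hNe B hB)).2.1, hAB]
  calc ∑ G' ∈ N, (lyap G₀ G' - lyap G₀ G)
      ≤ ∑ G' ∈ N, F (e G') := Finset.sum_le_sum fun G' h => (he G' (hNe G' h)).2.2
    _ = ∑ p ∈ N.image e, F p := (Finset.sum_image hinj).symm
    _ ≤ ∑ p ∈ edges G.1 ×ˢ edges G.1, F p := by
        apply Finset.sum_le_sum_of_subset_of_nonneg
        · intro p hp
          obtain ⟨G', h, rfl⟩ := Finset.mem_image.mp hp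
          exact (he G' (hNe G' h)).1
        · exact fun p _ _ => hF p

lemma not_switchAdj_self {n : ℕ} (A : BG n) : ¬ SwitchAdj A A := by
  rintro ⟨i₁, i₂, j₁, j₂, hi, hj, h1, h2, h3, h4, h⟩
  have := congrFun (congrFun h i₁) j₁
  simp [switchMove, h1] at this

/-- `Qu` acts on a function by summing its increments over neighbours, at constant rate. -/
lemma Qu_apply (n d : ℕ) (G : OmegaB n d) (f : OmegaB n d → ℝ) :
    ∑ G', Qu n d G G' * f G' = 2 / ((n * d : ℝ) * ((n * d : ℝ) - 1)) *
      ∑ G' ∈ univ.filter (fun G' : OmegaB n d => SwitchAdj G.1 G'.1), (f G' - f G) := by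
  set r := 2 / ((n * d : ℝ) * ((n * d : ℝ) - 1)) with hr
  have h : ∀ G' : OmegaB n d, Qu n d G G' * f G' =
      (if G = G' then -(numNeighbors n d G : ℝ) * r * f G' else 0) +
        (if SwitchAdj G.1 G'.1 then r * f G' else 0) := by
    intro G'
    unfold Qu
    by_cases hG : G = G'
    · subst hG
      simp [not_switchAdj_self, hr]
    · simp [hG, hr]
  simp only [h, Finset.sum_add_distrib, Finset.sum_ite_eq, Finset.mem_univ, if_true,
    ← Finset.sum_filter, Finset.sum_sub_distrib, Finset.sum_const, numNeighbors, nsmul_eq_mul,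
    ← Finset.mul_sum]
  ring

/-- Drift inequality `Q_u φ ≤ (16 / nd) φ` for `φ = lyap G₀`. -/
lemma Qu_lyap_le {n d : ℕ} (hnd : 2 ≤ n * d) (G₀ G : OmegaB n d) :
    ∑ G', Qu n d G G' * lyap G₀ G' ≤ 16 / (n * d : ℝ) * lyap G₀ G := by
  have hn : 0 < n := Nat.pos_of_ne_zero (by rintro rfl; simp at hnd)
  have h2 : (2 : ℝ) ≤ n * d := by exact_mod_cast hnd
  have hl : 0 ≤ lyap G₀ G := by unfold lyap; positivity
  rw [Qu_apply]
  have hp : 0 < (n * d : ℝ) - 1 := by linarith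
  calc 2 / ((n * d : ℝ) * ((n * d : ℝ) - 1)) * _
      ≤ 2 / ((n * d : ℝ) * ((n * d : ℝ) - 1)) * (4 * (n * d : ℝ) * lyap G₀ G) := by
        apply mul_le_mul_of_nonneg_left (sum_neighbors_le hn G₀ G)
        positivity
    _ = 8 / ((n * d : ℝ) - 1) * lyap G₀ G := by
        have : (n * d : ℝ) ≠ 0 := by linarith
        have h' := hp.ne'
        generalize (n * d : ℝ) = y at *
        field_simp
        ring
    _ ≤ 16 / (n * d : ℝ) * lyap G₀ G := by
        apply mul_le_mul_of_nonneg_right _ hl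
        rw [div_le_div_iff₀ hp (by linarith)]
        linarith

/-! ### The semigroup generated by a rate matrix -/

section Semigroup

variable {m : Type*} [Fintype m] [DecidableEq m]

/-- The series defining `matExp` converges, so that its `tsum` is not a junk value. -/
lemma hasSum_matExp (A : Matrix m m ℝ) :
    HasSum (fun k : ℕ => ((k.factorial : ℝ)⁻¹) • A ^ k) (matExp A) := by
  let _ : NormedRing (Matrix m m ℝ) := Matrix.linftyOpNormedRing
  let _ : NormedAlgebra ℝ (Matrix m m ℝ) := Matrix.linftyOpNormedAlgebra
  exact (NormedSpace.expSeries_summable' (𝕂 := ℝ) A).hasSum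

lemma matExp_eq_exp (A : Matrix m m ℝ) : matExp A = NormedSpace.exp A := by
  rw [NormedSpace.exp_eq_tsum ℝ]
  rfl

lemma hasSum_matExp_mulVec (A : Matrix m m ℝ) (v : m → ℝ) (i : m) :
    HasSum (fun k : ℕ => ((k.factorial : ℝ)⁻¹) * (A ^ k).mulVec v i) ((matExp A).mulVec v i) := by
  have hc : Continuous fun M : Matrix m m ℝ => M.mulVec v i := by
    exact (continuous_apply i).comp (Continuous.matrix_mulVec continuous_id continuous_const)
  have := (hasSum_matExp A).map
    (⟨⟨fun M : Matrix m m ℝ => M.mulVec v i, by simp⟩, by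
      intro M N; simp [Matrix.add_mulVec]⟩ : Matrix m m ℝ →+ ℝ) hc
  have e : (fun k : ℕ => ((k.factorial : ℝ)⁻¹) * (A ^ k).mulVec v i)
      = fun k : ℕ => (((k.factorial : ℝ)⁻¹) • A ^ k).mulVec v i := by
    funext k
    simp [Matrix.smul_mulVec]
  rw [e]
  exact this

lemma matExp_nonneg_of_nonneg {A : Matrix m m ℝ} (hA : ∀ i j, 0 ≤ A i j) (i j : m) :
    0 ≤ matExp A i j := by
  have hk : ∀ k : ℕ, ∀ i j, 0 ≤ (A ^ k) i j := by
    intro k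
    induction k with
    | zero => intro i j; simp only [pow_zero, Matrix.one_apply]; split_ifs <;> norm_num
    | succ k ih =>
      intro i j
      rw [pow_succ, Matrix.mul_apply]
      exact Finset.sum_nonneg fun l _ => mul_nonneg (ih _ _) (hA _ _)
  have := hasSum_matExp_mulVec A (Pi.single j 1) i
  simp only [Matrix.mulVec_single_one] at this
  exact this.nonneg fun k => mul_nonneg (by positivity) (hk _ _ _)

/-- If `A v ≤ a v` entrywise with `A ≥ 0`, then `exp(A) v ≤ e^a v`. -/
lemma matExp_mulVec_le_of_nonneg {A : Matrix m m ℝ} (hA : ∀ i j, 0 ≤ A i j) {v : m → ℝ} {a : ℝ}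
    (ha : 0 ≤ a) (h : ∀ i, A.mulVec v i ≤ a * v i) (i : m) :
    (matExp A).mulVec v i ≤ Real.exp a * v i := by
  have hk : ∀ k : ℕ, ∀ i, (A ^ k).mulVec v i ≤ a ^ k * v i := by
    intro k
    induction k with
    | zero => intro i; simp
    | succ k ih =>
      intro i
      rw [pow_succ', ← Matrix.mulVec_mulVec]
      calc A.mulVec ((A ^ k).mulVec v) i
          ≤ ∑ j, A i j * (a ^ k * v j) :=
            Finset.sum_le_sum fun j _ => mul_le_mul_of_nonneg_left (ih j) (hA i j)
        _ = a ^ k * A.mulVec v i := by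
            simp only [Matrix.mulVec, dotProduct, Finset.mul_sum]
            exact Finset.sum_congr rfl fun j _ => by ring
        _ ≤ a ^ k * (a * v i) := mul_le_mul_of_nonneg_left (h i) (by positivity)
        _ = a ^ (k + 1) * v i := by ring
  have h1 := hasSum_matExp_mulVec A v i
  have h2 : HasSum (fun k : ℕ => ((k.factorial : ℝ)⁻¹) * (a ^ k * v i)) (Real.exp a * v i) := by
    have := (NormedSpace.expSeries_div_hasSum_exp a).mul_right (v i)
    rw [← Real.exp_eq_exp_ℝ] at this
    have e : (fun k : ℕ => ((k.factorial : ℝ)⁻¹) * (a ^ k * v i))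
        = fun k : ℕ => a ^ k / (k.factorial : ℝ) * v i := by
      funext k
      ring
    rw [e]
    exact this
  exact hasSum_le (fun k => mul_le_mul_of_nonneg_left (hk k i) (by positivity)) h1 h2

lemma matExp_add_scalar (A : Matrix m m ℝ) (s : ℝ) :
    matExp (A + s • 1) = Real.exp s • matExp A := by
  rw [matExp_eq_exp, matExp_eq_exp, Matrix.exp_add_of_commute _ _
    ((Commute.one_right A).smul_right s)]
  have : (s • (1 : Matrix m m ℝ)) = Matrix.diagonal fun _ => s := by
    rw [Matrix.smul_one_eq_diagonal]
  rw [this, Matrix.exp_diagonal]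
  have h2 : NormedSpace.exp (fun _ : m => s) = fun _ => Real.exp s := by
    ext i
    rw [Real.exp_eq_exp_ℝ, Pi.coe_exp]
  rw [h2, ← Matrix.smul_one_eq_diagonal]
  simp

lemma exists_shift (A : Matrix m m ℝ) (hA : ∀ i j, i ≠ j → 0 ≤ A i j) :
    ∃ s : ℝ, 0 ≤ s ∧ ∀ i j, 0 ≤ (A + s • (1 : Matrix m m ℝ)) i j := by
  refine ⟨∑ i, |A i i|, Finset.sum_nonneg fun _ _ => abs_nonneg _, fun i j => ?_⟩
  by_cases hij : i = j
  · subst hij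
    have : |A i i| ≤ ∑ i, |A i i| :=
      Finset.single_le_sum (f := fun i => |A i i|) (fun _ _ => abs_nonneg _) (Finset.mem_univ i)
    have := neg_abs_le (A i i)
    simp
    linarith
  · simpa [Matrix.one_apply, hij] using hA i j hij

lemma matExp_nonneg {A : Matrix m m ℝ} (hA : ∀ i j, i ≠ j → 0 ≤ A i j) (i j : m) :
    0 ≤ matExp A i j := by
  obtain ⟨s, _, hs⟩ := exists_shift A hA
  have h := matExp_nonneg_of_nonneg hs i j
  rw [matExp_add_scalar, Matrix.smul_apply, smul_eq_mul] at h
  exact nonneg_of_mul_nonneg_right h (Real.exp_pos s)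

/-- A drift inequality `A v ≤ a v` for a rate matrix integrates to `exp(A) v ≤ e^a v`; the diagonal
is made nonnegative by adding a multiple of the identity. -/
lemma matExp_mulVec_le {A : Matrix m m ℝ} (hA : ∀ i j, i ≠ j → 0 ≤ A i j) {v : m → ℝ} {a : ℝ}
    (ha : 0 ≤ a) (h : ∀ i, A.mulVec v i ≤ a * v i) (i : m) :
    (matExp A).mulVec v i ≤ Real.exp a * v i := by
  obtain ⟨s, hs0, hs⟩ := exists_shift A hA
  have h' := matExp_mulVec_le_of_nonneg hs (v := v) (a := a + s) (by linarith)
    (fun j => by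
      have := h j
      simp [Matrix.add_mulVec, Matrix.smul_mulVec]
      linarith) i
  rw [matExp_add_scalar, Matrix.smul_mulVec, Pi.smul_apply, smul_eq_mul, Real.exp_add,
    mul_comm (Real.exp a), mul_assoc] at h'
  exact le_of_mul_le_mul_left h' (Real.exp_pos s)

lemma matExp_row_sum {A : Matrix m m ℝ} (hA : ∀ i, ∑ j, A i j = 0) (i : m) :
    ∑ j, matExp A i j = 1 := by
  have h0 : A.mulVec (fun _ => 1) = 0 := by
    ext i
    simp [Matrix.mulVec, dotProduct, hA]
  have h1 := hasSum_matExp_mulVec A (fun _ => 1) i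
  have h2 := hasSum_single (f := fun k : ℕ =>
      ((k.factorial : ℝ)⁻¹) * (A ^ k).mulVec (fun _ => 1) i) 0 (by
    intro k hk
    obtain ⟨k, rfl⟩ := Nat.exists_eq_succ_of_ne_zero hk
    simp [pow_succ, ← Matrix.mulVec_mulVec, h0])
  have h3 := h1.unique h2
  simpa [Matrix.mulVec, dotProduct, Matrix.one_apply] using h3

end Semigroup

/-- Only the equality of total masses is needed; signs of `μ` and `ν` play no role. -/
lemma le_tvDist {Ω : Type*} [Fintype Ω] {μ ν : Ω → ℝ} (h : ∑ ω, μ ω = ∑ ω, ν ω)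
    (S : Finset Ω) : ∑ ω ∈ S, ν ω - ∑ ω ∈ S, μ ω ≤ tvDist μ ν := by
  have h1 : ∑ ω ∈ S, (ν ω - μ ω) ≤ ∑ ω ∈ S, |μ ω - ν ω| :=
    Finset.sum_le_sum fun ω _ => by rw [abs_sub_comm]; exact le_abs_self _
  have h2 : ∑ ω ∈ Sᶜ, (μ ω - ν ω) ≤ ∑ ω ∈ Sᶜ, |μ ω - ν ω| :=
    Finset.sum_le_sum fun ω _ => le_abs_self _
  have h3 := Finset.sum_add_sum_compl S μ
  have h4 := Finset.sum_add_sum_compl S ν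
  have h5 := Finset.sum_add_sum_compl S fun ω => |μ ω - ν ω|
  rw [Finset.sum_sub_distrib] at h1 h2
  unfold tvDist
  linarith

/-! ### Overlap under the uniform measure -/

lemma omegaB_nonempty {n d : ℕ} (hn : 0 < n) (hd : d ≤ n) : Nonempty (OmegaB n d) := by
  have : NeZero n := ⟨Nat.ne_of_gt hn⟩
  -- the circulant graph: `i` is joined to `i, i + 1, …, i + d - 1` modulo `n`
  have hc : (univ.filter fun k : Fin n => (k : ℕ) < d).card = d := by
    rw [Fin.card_filter_val_lt]
    exact min_eq_right hd
  refine ⟨⟨fun i j => decide (((j - i : Fin n) : ℕ) < d), fun i => ?_, fun j => ?_⟩⟩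
  · refine Eq.trans ?_ hc
    apply Finset.card_equiv (Equiv.subRight i)
    intro j
    simp
  · refine Eq.trans ?_ hc
    apply Finset.card_equiv (Equiv.subLeft j)
    intro i
    simp

/-- Reordering the columns of a `d`-regular graph by a permutation. -/
def permCols {n d : ℕ} (σ : Equiv.Perm (Fin n)) (G : OmegaB n d) : OmegaB n d :=
  ⟨fun i j => G.1 i (σ j), fun i => by
    refine Eq.trans ?_ (G.2.1 i)
    apply Finset.card_equiv σ
    intro j
    simp, fun j => by
    exact G.2.2 (σ j)⟩

/-- Every potential edge is present in a uniform `d`-regular graph with probability `d / n`,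
because permuting columns preserves the uniform measure. -/
lemma card_edge_mul {n d : ℕ} (i j : Fin n) :
    n * (univ.filter fun G : OmegaB n d => G.1 i j = true).card
      = d * Fintype.card (OmegaB n d) := by
  have hsym : ∀ j', (univ.filter fun G : OmegaB n d => G.1 i j' = true).card
      = (univ.filter fun G : OmegaB n d => G.1 i j = true).card := by
    intro j'
    apply Finset.card_bij' (fun G _ => permCols (Equiv.swap j j') G)
      (fun G _ => permCols (Equiv.swap j j') G)
    · intro G hG; simpa [permCols] using hG
    · intro G hG; simpa [permCols] using hG
    · intro G _; simp [permCols]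
    · intro G _; simp [permCols]
  have h1 : ∑ j', (univ.filter fun G : OmegaB n d => G.1 i j' = true).card
      = n * (univ.filter fun G : OmegaB n d => G.1 i j = true).card := by
    simp [hsym]
  rw [← h1]
  simp only [Finset.card_filter]
  rw [Finset.sum_comm]
  simp only [← Finset.card_filter]
  rw [Finset.sum_congr rfl fun (G : OmegaB n d) _ => G.2.1 i]
  simp [mul_comm]

/-- The mean overlap of a uniform graph with any fixed `G₀` is `d²`. -/
lemma sum_ov {n d : ℕ} (hn : 0 < n) (G₀ : OmegaB n d) :
    ∑ G : OmegaB n d, ov G₀.1 G.1 = d ^ 2 * Fintype.card (OmegaB n d) := by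
  have h : ∑ G : OmegaB n d, ov G₀.1 G.1
      = ∑ p ∈ edges G₀.1, (univ.filter fun G : OmegaB n d => G.1 p.1 p.2 = true).card := by
    simp only [Finset.card_filter]
    rw [Finset.sum_comm]
    refine Finset.sum_congr rfl fun G _ => ?_
    rw [ov, ← Finset.filter_mem_eq_inter, Finset.card_filter]
    simp only [mem_edges]
  apply Nat.eq_of_mul_eq_mul_left hn
  rw [h, Finset.mul_sum, Finset.sum_congr rfl fun p _ => card_edge_mul (d := d) p.1 p.2]
  simp only [Finset.sum_const, card_edges, smul_eq_mul]
  ring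

/-- Markov's inequality: overlap below `2 d²` has stationary probability at least `1 / 2`. -/
lemma half_le_piU {n d : ℕ} (hn : 0 < n) (hd : 0 < d) (G₀ : OmegaB n d) :
    1 / 2 ≤ ∑ G ∈ univ.filter (fun G : OmegaB n d => ov G₀.1 G.1 < 2 * d ^ 2), piU n d G := by
  have hN : 0 < Fintype.card (OmegaB n d) := Fintype.card_pos_iff.mpr ⟨G₀⟩
  set S := univ.filter (fun G : OmegaB n d => ov G₀.1 G.1 < 2 * d ^ 2) with hS
  have h1 : Sᶜ.card * (2 * d ^ 2) ≤ d ^ 2 * Fintype.card (OmegaB n d) := by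
    rw [← sum_ov hn G₀, ← smul_eq_mul]
    refine le_trans (Finset.card_nsmul_le_sum Sᶜ (fun G => ov G₀.1 G.1) _ ?_)
      (Finset.sum_le_sum_of_subset (Finset.subset_univ _))
    intro G hG
    simpa [hS] using hG
  have h2 : 2 * Sᶜ.card ≤ Fintype.card (OmegaB n d) := by
    have : 0 < d ^ 2 := by positivity
    nlinarith
  have h3 := Finset.card_add_card_compl S
  have h4 : Fintype.card (OmegaB n d) ≤ 2 * S.card := by omega
  have h5 : (Fintype.card (OmegaB n d) : ℝ) ≤ 2 * S.card := by exact_mod_cast h4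
  have h6 : (0 : ℝ) < Fintype.card (OmegaB n d) := by exact_mod_cast hN
  simp only [piU, Finset.sum_const, nsmul_eq_mul]
  rw [← div_eq_mul_inv, div_le_div_iff₀ (by norm_num) h6]
  linarith

/-! ### Overlap along the chain -/

lemma smul_QuMat_offdiag {n d : ℕ} (hnd : 2 ≤ n * d) {t : ℝ} (ht : 0 ≤ t) (G G' : OmegaB n d)
    (h : G ≠ G') : 0 ≤ (t • QuMat n d) G G' := by
  have h2 : (2 : ℝ) ≤ n * d := by exact_mod_cast hnd
  have h3 : 0 < (n * d : ℝ) - 1 := by linarith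
  simp only [QuMat, Matrix.smul_apply, Matrix.of_apply, Qu, if_neg h, smul_eq_mul]
  split_ifs
  · positivity
  · simp

lemma smul_QuMat_row_sum {n d : ℕ} (t : ℝ) (G : OmegaB n d) :
    ∑ G', (t • QuMat n d) G G' = 0 := by
  have := Qu_apply n d G fun _ => 1
  simp only [mul_one, sub_self, Finset.sum_const_zero, mul_zero] at this
  simp [QuMat, ← Finset.mul_sum, this]

/-- Markov's inequality for `lyap` at time `t`, the chain starting from `G₀`, where the
overlap is `nd`. -/
lemma prob_small_overlap_le {n d : ℕ} (hnd : 2 ≤ n * d) {t : ℝ} (ht : 0 ≤ t) (K : ℕ)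
    (G₀ : OmegaB n d) :
    ∑ G ∈ univ.filter (fun G : OmegaB n d => ov G₀.1 G.1 < K), matExp (t • QuMat n d) G₀ G
      ≤ K * (Real.exp (16 * t / (n * d)) / (n * d)) := by
  have h2 : (2 : ℝ) ≤ n * d := by exact_mod_cast hnd
  have hnn := matExp_nonneg (fun G G' h => smul_QuMat_offdiag hnd ht (G := G) (G' := G') h) G₀
  have h := matExp_mulVec_le (fun G G' h => smul_QuMat_offdiag hnd ht (G := G) (G' := G') h)
    (v := lyap G₀) (a := 16 * t / (n * d)) (by positivity) (fun G => by
      have := mul_le_mul_of_nonneg_left (Qu_lyap_le hnd G₀ G) ht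
      rw [Matrix.smul_mulVec]
      calc _ = t * ∑ G', Qu n d G G' * lyap G₀ G' := rfl
        _ ≤ _ := this
        _ = _ := by ring) G₀
  have hl0 : ∀ G, 0 ≤ lyap G₀ G := fun G => by unfold lyap; positivity
  have hstart : lyap G₀ G₀ ≤ 1 / (n * d : ℝ) := by
    have : (ov G₀.1 G₀.1 : ℝ) = n * d := by
      rw [ov, Finset.inter_self, card_edges]; push_cast; rfl
    unfold lyap
    rw [this]
    exact one_div_le_one_div_of_le (by linarith) (by linarith)
  have hE : ∑ G, matExp (t • QuMat n d) G₀ G * lyap G₀ G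
      ≤ Real.exp (16 * t / (n * d)) / (n * d) := by
    refine le_trans h (le_trans (mul_le_mul_of_nonneg_left hstart (Real.exp_pos _).le) ?_)
    rw [mul_one_div]
  refine le_trans ?_ (mul_le_mul_of_nonneg_left hE (Nat.cast_nonneg K))
  rw [Finset.mul_sum]
  refine le_trans (Finset.sum_le_sum fun G hG => ?_)
    (Finset.sum_le_sum_of_subset_of_nonneg (Finset.subset_univ _) fun G _ _ =>
      mul_nonneg (Nat.cast_nonneg K) (mul_nonneg (hnn G) (hl0 G)))
  have hK : (ov G₀.1 G.1 : ℝ) + 1 ≤ K := by exact_mod_cast (Finset.mem_filter.mp hG).2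
  have h1 : 1 ≤ K * lyap G₀ G := by
    unfold lyap
    rw [mul_one_div, le_div_iff₀ (by positivity)]
    linarith
  nlinarith [hnn G]

/-- Proposition 4.2: for `n ≥ C` and `2 ≤ d ≤ n^{1/4}`, the total variation mixing
time of the switch chain is at least `c · n · d · log n`. -/
theorem switch_chain_mixing_lower :
    ∃ C c : ℝ, 0 < C ∧ 0 < c ∧
      ∀ n d : ℕ, C ≤ (n : ℝ) → 2 ≤ d → (d : ℝ) ≤ (n : ℝ) ^ ((1 : ℝ) / 4) →
        ∀ t : ℝ, 0 ≤ t → t ≤ c * n * d * Real.log n →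
          ∃ G₀ : OmegaB n d,
            1 / 4 < tvDist (fun G' => matExp (t • QuMat n d) G₀ G') (piU n d) := by
  refine ⟨100, 1 / 64, by norm_num, by norm_num, fun n d hC hd hdn t ht htc => ?_⟩
  have hn1 : (1 : ℝ) ≤ n := by linarith
  have hn0 : (0 : ℝ) < n := by linarith
  have hd2 : (2 : ℝ) ≤ d := by exact_mod_cast hd
  have hnN : 0 < n := by exact_mod_cast hn0
  have hdN : d ≤ n := by
    have h : (d : ℝ) ≤ n := hdn.trans (Real.rpow_le_self_of_one_le hn1 (by norm_num))
    exact_mod_cast h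
  obtain ⟨G₀⟩ := omegaB_nonempty hnN hdN
  refine ⟨G₀, ?_⟩
  have hnd : 2 ≤ n * d := by nlinarith
  set q : ℝ := (n : ℝ) ^ ((1 : ℝ) / 4) with hq
  have hq0 : 0 < q := Real.rpow_pos_of_pos hn0 _
  have hq4 : q ^ 4 = n := by
    rw [hq, ← Real.rpow_natCast, ← Real.rpow_mul hn0.le]
    norm_num
  -- `c = 1 / 64` makes the growth factor of the Lyapunov function at most `n ^ (1 / 4)`
  have hexp : Real.exp (16 * t / (n * d)) ≤ q := by
    rw [hq, Real.rpow_def_of_pos hn0]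
    apply Real.exp_le_exp.mpr
    rw [div_le_iff₀ (by positivity)]
    linarith
  have hsmall := prob_small_overlap_le hnd ht (2 * d ^ 2) G₀
  have hlarge := half_le_piU hnN (by omega) G₀
  have hbound : ((2 * d ^ 2 : ℕ) : ℝ) * (Real.exp (16 * t / (n * d)) / (n * d)) < 1 / 4 := by
    have h8 : 8 < q ^ 2 := by
      by_contra! hle
      nlinarith [sq_nonneg q]
    have h1 : (d : ℝ) * Real.exp (16 * t / (n * d)) ≤ q * q :=
      mul_le_mul hdn hexp (Real.exp_pos _).le hq0.le
    rw [← mul_div_assoc, div_lt_iff₀ (by positivity)]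
    push_cast
    have h2 : 8 * (q * q) < n := by
      rw [← hq4]
      nlinarith
    nlinarith
  have hsum : ∑ G, matExp (t • QuMat n d) G₀ G = ∑ G, piU n d G := by
    rw [matExp_row_sum (smul_QuMat_row_sum t)]
    have : Nonempty (OmegaB n d) := ⟨G₀⟩
    simp [piU]
  have htv := le_tvDist hsum
    (univ.filter fun G : OmegaB n d => ov G₀.1 G.1 < 2 * d ^ 2)
  linarith
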